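/- Let G be a finite tree (a connected simple graph with no cycles) with at least one edge. Then for every rotation system σ on G, the face permutation of (G,σ) has exactly one orbit (so the embedding has exactly one face), and consequently the genus of G is 0. -/

import Mathlib

namespace Genus

open SimpleGraph

variable {V : Type*} (G : SimpleGraph V)

/-- The dart-reversal involution, as a permutation of the darts. -/
def dartRev : Equiv.Perm G.Dart where
  toFun d := d.symm
  invFun d := d.symm
  left_inv d := d.symm_symm
  right_inv d := d.symm_symm

/-- A rotation system on `G`: a permutation of the darts sending each dart to a dart
with the same initial vertex, whose restriction to the darts leaving any fixed vertex
is a single cycle (equivalently, acts transitively on them). -/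
def IsRotationSystem (σ : Equiv.Perm G.Dart) : Prop :=
  (∀ d : G.Dart, (σ d).fst = d.fst) ∧
    ∀ d d' : G.Dart, d.fst = d'.fst → ∃ n : ℕ, (σ ^ n) d = d'

/-- The face permutation `φ(d) = σ(d̄)` of the embedding `(G, σ)`. -/
def facePerm (σ : Equiv.Perm G.Dart) : Equiv.Perm G.Dart := σ * dartRev G

/-- Two darts are equivalent iff they lie in the same face (same orbit of `φ`). -/
def faceSetoid (σ : Equiv.Perm G.Dart) : Setoid G.Dart :=
  ⟨(facePerm G σ).SameCycle,
    ⟨fun x => Equiv.Perm.SameCycle.refl _ x, fun h => h.symm, fun h h' => h.trans h'⟩⟩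

/-- The number of faces of the embedding `(G, σ)`: the number of orbits of the
face permutation on the darts. -/
noncomputable def numFaces (σ : Equiv.Perm G.Dart) : ℕ :=
  Nat.card (Quotient (faceSetoid G σ))

/-- `faceSize G σ e` is `f(e)`, the number of darts in the face containing `e`. -/
noncomputable def faceSize (σ : Equiv.Perm G.Dart) (e : G.Dart) : ℕ :=
  Nat.card {d : G.Dart // (facePerm G σ).SameCycle e d}

/-- The genus `1 + (|E| - |V| - |F|)/2` of the embedding `(G, σ)`. -/
noncomputable def embGenus [Fintype V] (σ : Equiv.Perm G.Dart) : ℚ :=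
  1 + ((Nat.card G.edgeSet : ℚ) - (Nat.card V : ℚ) - (numFaces G σ : ℚ)) / 2

/-- The set of genera of all embeddings of `G`; the genus of `G` is its minimum. -/
def genusSet [Fintype V] : Set ℚ :=
  {g : ℚ | ∃ σ : Equiv.Perm G.Dart, IsRotationSystem G σ ∧ embGenus G σ = g}

/-- A facial-like walk: a cyclic sequence of `k` pairwise distinct darts such that each dart
starts at the end vertex of the previous one, and a dart is followed by its reverse
iff its end vertex has degree 1. -/
def IsFacialLikeWalk [Fintype V] [DecidableRel G.Adj] {k : ℕ} (w : Fin k → G.Dart) : Prop :=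
  ∃ hk : 0 < k, Function.Injective w ∧
    ∀ i : Fin k,
      (w ⟨(i + 1) % k, Nat.mod_lt _ hk⟩).fst = (w i).snd ∧
        (w ⟨(i + 1) % k, Nat.mod_lt _ hk⟩ = (w i).symm ↔ G.degree (w i).snd = 1)

/-- `fw G e` is `f_w(e)`, the length of a shortest facial-like walk containing the dart `e`. -/
noncomputable def fw [Fintype V] [DecidableRel G.Adj] (e : G.Dart) : ℕ :=
  sInf {k : ℕ | ∃ w : Fin k → G.Dart, IsFacialLikeWalk G w ∧ ∃ i, w i = e}

end Genus

/-!
In a tree every edge is a bridge. A finite face through a bridge must cross it again in the opposite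
direction: otherwise, after crossing once, the face would stay on the far side and never return. So
every face is closed under reversing darts. As `σ = φ ∘ (reversal)`, faces are then also closed
under rotating about a vertex, and by connectedness there is only one. With `|F| = 1` and
`|V| = |E| + 1` the genus formula gives `0` for every rotation system, and a rotation system exists.
-/

namespace Genus

open Function SimpleGraph

section FiberwiseCycles

variable {α β : Type*}

theorem isCycleOn_of_eqOn {f g : Equiv.Perm α} {s : Set α} (hf : f.IsCycleOn s)
    (hfg : Set.EqOn f g s) : g.IsCycleOn s := by
  have hg : Set.BijOn g s s := hf.1.congr hfg
  have hf_mem : ∀ x, f x ∈ s ↔ x ∈ s := fun _ => hf.apply_mem_iff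
  have hg_mem : ∀ x, g x ∈ s ↔ x ∈ s := fun x =>
    ⟨fun hx => by simpa using hg.perm_inv.mapsTo hx, fun hx => hg.mapsTo hx⟩
  have hres : f.subtypePerm hf_mem = g.subtypePerm hg_mem :=
    Equiv.ext fun x => Subtype.ext (hfg x.2)
  refine ⟨hg, fun x hx y hy => ?_⟩
  have hxy : (f.subtypePerm hf_mem).SameCycle ⟨x, hx⟩ ⟨y, hy⟩ := (hf.2 hx hy).subtypePerm
  rw [hres] at hxy
  exact Equiv.Perm.sameCycle_subtypePerm.mp hxy

theorem exists_perm_forall_isCycleOn_fiber (f : α → β) (hf : ∀ b, (f ⁻¹' {b}).Countable) :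
    ∃ σ : Equiv.Perm α, ∀ b, σ.IsCycleOn (f ⁻¹' {b}) := by
  choose c hc _ using fun b => (hf b).exists_cycleOn
  have hfc : ∀ a, f (c (f a) a) = f a := fun a => (hc (f a)).1.mapsTo rfl
  have hfc_symm : ∀ a, f ((c (f a)).symm a) = f a := fun a => (hc (f a)).inv.1.mapsTo rfl
  let σ : Equiv.Perm α :=
    { toFun := fun a => c (f a) a
      invFun := fun a => (c (f a)).symm a
      left_inv := fun a => by simp only [hfc, Equiv.symm_apply_apply]
      right_inv := fun a => by simp only [hfc_symm, Equiv.apply_symm_apply] }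
  refine ⟨σ, fun b => isCycleOn_of_eqOn (hc b) ?_⟩
  rintro a rfl
  rfl

end FiberwiseCycles

variable {V : Type*} {G : SimpleGraph V}

theorem finite_setOf_dart_fst_eq (v : V) [Finite (G.neighborSet v)] :
    {d : G.Dart | d.fst = v}.Finite := by
  refine (Set.finite_range (G.dartOfNeighborSet v)).subset ?_
  rintro d rfl
  exact ⟨⟨d.snd, d.adj⟩, rfl⟩

variable (G) in
theorem exists_isRotationSystem [∀ v, Finite (G.neighborSet v)] :
    ∃ σ : Equiv.Perm G.Dart, IsRotationSystem G σ := by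
  obtain ⟨σ, hσ⟩ := exists_perm_forall_isCycleOn_fiber (fun d : G.Dart => d.fst)
    fun v => (finite_setOf_dart_fst_eq v).countable
  exact ⟨σ, fun d => (hσ d.fst).1.mapsTo rfl, fun d d' hd =>
    (hσ d.fst).exists_pow_eq' (finite_setOf_dart_fst_eq d.fst) rfl hd.symm⟩

theorem setoid_dart_eq_top (hG : G.Preconnected) (r : Setoid G.Dart)
    (hsymm : ∀ d, r d d.symm) (hfst : ∀ d d' : G.Dart, d.fst = d'.fst → r d d') : r = ⊤ := by
  have hwalk {u v : V} (p : G.Walk u v) :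
      ∀ d d' : G.Dart, d.fst = u → d'.fst = v → r d d' := by
    induction p with
    | nil => exact fun d d' hd hd' => hfst d d' (hd.trans hd'.symm)
    | cons hadj _ ih =>
      intro d d' hd hd'
      let e : G.Dart := ⟨(_, _), hadj⟩
      exact r.trans (r.trans (hfst d e hd) (hsymm e)) (ih e.symm d' rfl hd')
  refine Setoid.eq_top_iff.mpr fun d d' => ?_
  obtain ⟨p⟩ := hG d.fst d'.fst
  exact hwalk p d d' rfl rfl

variable {σ : Equiv.Perm G.Dart}

theorem facePerm_symm (d : G.Dart) : facePerm G σ d.symm = σ d :=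
  congrArg σ d.symm_symm

theorem facePerm_fst (hσ : ∀ d, (σ d).fst = d.fst) (d : G.Dart) :
    (facePerm G σ d).fst = d.snd :=
  hσ d.symm

theorem reachable_deleteEdges_iterate_facePerm (hσ : ∀ d, (σ d).fst = d.fst) {s : Set (Sym2 V)}
    {d : G.Dart} {n : ℕ} (hs : ∀ k < n, ((facePerm G σ)^[k] d).edge ∉ s) :
    (G.deleteEdges s).Reachable d.fst ((facePerm G σ)^[n] d).fst := by
  induction n with
  | zero => exact Reachable.rfl
  | succ n ih =>
    rw [iterate_succ_apply', facePerm_fst hσ]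
    set e := (facePerm G σ)^[n] d
    have hadj : (G.deleteEdges s).Adj e.fst e.snd :=
      deleteEdges_adj.mpr ⟨e.adj, hs n n.lt_succ_self⟩
    exact (ih fun k hk => hs k (hk.trans n.lt_succ_self)).trans hadj.reachable

theorem sameCycle_facePerm_symm_of_isBridge (hσ : ∀ d, (σ d).fst = d.fst) {d : G.Dart}
    (hd : d ∈ periodicPts (facePerm G σ)) (hbridge : G.IsBridge d.edge) :
    (facePerm G σ).SameCycle d d.symm := by
  by_contra hsymm
  obtain ⟨m, hm⟩ : ∃ m, minimalPeriod (facePerm G σ) d = m + 1 :=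
    Nat.exists_eq_add_one.mpr (minimalPeriod_pos_of_mem_periodicPts hd)
  have hreturn : (facePerm G σ)^[m] (facePerm G σ d) = d := by
    rw [← iterate_succ_apply, Nat.succ_eq_add_one, ← hm, iterate_minimalPeriod]
  have havoid : ∀ k < m,
      ((facePerm G σ)^[k] (facePerm G σ d)).edge ∉ ({d.edge} : Set (Sym2 V)) := by
    intro k hk hedge
    rw [← iterate_succ_apply] at hedge
    rcases (dart_edge_eq_iff _ d).mp hedge with heq | heq
    · exact not_isPeriodicPt_of_pos_of_lt_minimalPeriod k.succ_ne_zero (by lia) heq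
    · exact hsymm ⟨(k + 1 : ℕ), by rw [zpow_natCast, ← Equiv.Perm.iterate_eq_pow, heq]⟩
  have hreach := reachable_deleteEdges_iterate_facePerm hσ havoid
  rw [hreturn, facePerm_fst hσ] at hreach
  exact isBridge_iff.mp hbridge hreach.symm

theorem sameCycle_facePerm_pow (hsymm : ∀ d, (facePerm G σ).SameCycle d d.symm) (d : G.Dart)
    (n : ℕ) : (facePerm G σ).SameCycle d ((σ ^ n) d) := by
  have hrotate (e : G.Dart) : (facePerm G σ).SameCycle e (σ e) := by
    rw [← facePerm_symm, Equiv.Perm.sameCycle_apply_right]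
    exact hsymm e
  induction n with
  | zero => rfl
  | succ n ih =>
    rw [pow_succ', Equiv.Perm.mul_apply]
    exact ih.trans (hrotate _)

theorem IsRotationSystem.faceSetoid_eq_top_of_isTree [Finite G.Dart] (hσ : IsRotationSystem G σ)
    (hT : G.IsTree) : faceSetoid G σ = ⊤ := by
  have hsymm (d : G.Dart) : (facePerm G σ).SameCycle d d.symm :=
    sameCycle_facePerm_symm_of_isBridge hσ.1 ((facePerm G σ).injective.mem_periodicPts d)
      (isAcyclic_iff_forall_isBridge.mp hT.isAcyclic d.edge_mem)
  refine setoid_dart_eq_top hT.connected.preconnected _ hsymm fun d d' hd => ?_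
  obtain ⟨n, rfl⟩ := hσ.2 d d' hd
  exact sameCycle_facePerm_pow hsymm d n

theorem numFaces_eq_one_iff_faceSetoid_eq_top [Nonempty G.Dart] :
    numFaces G σ = 1 ↔ faceSetoid G σ = ⊤ := by
  rw [numFaces, Nat.card_eq_one_iff_unique, Quotient.subsingleton_iff]
  exact and_iff_left (Nonempty.map (Quotient.mk _) ‹_›)

theorem embGenus_eq_zero_of_isTree [Fintype V] (hT : G.IsTree) (hF : numFaces G σ = 1) :
    embGenus G σ = 0 := by
  have hV : (Nat.card G.edgeSet : ℚ) + 1 = Nat.card V :=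
    mod_cast (isTree_iff_connected_and_card.mp hT).2
  rw [embGenus, hF, ← hV]
  norm_num

theorem nonempty_dart_of_nonempty_edgeSet (hE : G.edgeSet.Nonempty) : Nonempty G.Dart := by
  obtain ⟨⟨u, v⟩, huv⟩ := hE
  exact ⟨⟨(u, v), huv⟩⟩

end Genus

open SimpleGraph in
/-- For a finite tree `G` with at least one edge, every rotation system on `G`
yields an embedding whose face permutation has exactly one orbit (exactly one face);
consequently the genus of `G` (the minimum over all rotation systems of the genus
`1 + (|E| - |V| - |F|)/2` of the corresponding embedding) is `0`. -/
theorem tree_one_face_genus_zero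
    {V : Type*} [Fintype V] [DecidableEq V] (G : SimpleGraph V)
    (hT : G.IsTree) (hE : G.edgeSet.Nonempty) :
    (∀ σ : Equiv.Perm G.Dart, Genus.IsRotationSystem G σ → Genus.numFaces G σ = 1) ∧
      IsLeast (Genus.genusSet G) 0 := by
  classical
  have := Genus.nonempty_dart_of_nonempty_edgeSet hE
  have hfaces : ∀ σ : Equiv.Perm G.Dart, Genus.IsRotationSystem G σ → Genus.numFaces G σ = 1 :=
    fun _ hσ => Genus.numFaces_eq_one_iff_faceSetoid_eq_top.mpr (hσ.faceSetoid_eq_top_of_isTree hT)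
  have hgenus : ∀ σ : Equiv.Perm G.Dart, Genus.IsRotationSystem G σ → Genus.embGenus G σ = 0 :=
    fun σ hσ => Genus.embGenus_eq_zero_of_isTree hT (hfaces σ hσ)
  refine ⟨hfaces, ?_, ?_⟩
  · obtain ⟨σ, hσ⟩ := Genus.exists_isRotationSystem G
    exact ⟨σ, hσ, hgenus σ hσ⟩
  · rintro _ ⟨σ, hσ, rfl⟩
    exact (hgenus σ hσ).ge
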